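/- Let M and H be n×n real symmetric matrices with eigenvalues λ_1 ≥ ⋯ ≥ λ_n for M and λ̃_1 ≥ ⋯ ≥ λ̃_n for M+H, and let ṽ^(1), …, ṽ^(n) be an orthonormal basis of ℝ^n with (M+H) ṽ^(i) = λ̃_i ṽ^(i). For each s let Λ_s = { i : λ_i = λ_s }, d_s = |Λ_s|, and δ_s = min_{i ∉ Λ_s} |λ_s − λ_i|. Then there exists an orthonormal basis v^(1), …, v^(n) of ℝ^n with M v^(s) = λ_s v^(s) such that for every t: √(1 − ⟨ṽ^(t), v^(t)⟩²) ≤ 2 √(2 d_t) · ‖H‖ / δ_t, and for every s ≠ t with λ_s ≠ λ_t: |⟨ṽ^(t), v^(s)⟩| ≤ 2 √2 · ‖H‖ · min( √(d_s)/δ_s , √(d_t)/δ_t ). -/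

import Mathlib

open Matrix

/-- The spectral (operator) norm of a real square matrix. -/
noncomputable def specNorm {n : ℕ} (A : Matrix (Fin n) (Fin n) ℝ) : ℝ :=
  ‖Matrix.toEuclideanCLM (𝕜 := ℝ) A‖

/-- `d_s = |Λ_s|`, the multiplicity of the eigenvalue `λ_s`. -/
noncomputable def eigMult {n : ℕ} (lam : Fin n → ℝ) (s : Fin n) : ℕ :=
  Nat.card {i : Fin n // lam i = lam s}

/-- `δ_s = min_{i ∉ Λ_s} |λ_s - λ_i|`, the gap between `λ_s` and the nearest
distinct eigenvalue. -/
noncomputable def eigGap {n : ℕ} (lam : Fin n → ℝ) (s : Fin n) : ℝ :=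
  sInf {x : ℝ | ∃ i, lam i ≠ lam s ∧ x = |lam s - lam i|}


lemma specNorm_sq {n : ℕ} (H : Matrix (Fin n) (Fin n) ℝ) (x : Fin n → ℝ) :
    (H *ᵥ x) ⬝ᵥ (H *ᵥ x) ≤ specNorm H ^ 2 * (x ⬝ᵥ x) := by
  have key : ∀ y : Fin n → ℝ, y ⬝ᵥ y = ‖WithLp.toLp 2 y‖ ^ 2 := by
    intro y
    rw [EuclideanSpace.real_norm_sq_eq]
    simp [dotProduct, sq]
  have h := (Matrix.toEuclideanCLM (𝕜 := ℝ) H).le_opNorm (WithLp.toLp 2 x)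
  rw [Matrix.toEuclideanCLM_toLp] at h
  rw [key, key, ← mul_pow]
  exact pow_le_pow_left₀ (norm_nonneg _) h 2

lemma specNorm_nonneg {n : ℕ} (H : Matrix (Fin n) (Fin n) ℝ) : 0 ≤ specNorm H := norm_nonneg _

lemma dot_self_nn {n : ℕ} (x : Fin n → ℝ) : 0 ≤ x ⬝ᵥ x :=
  Finset.sum_nonneg fun i _ => mul_self_nonneg (x i)

lemma dot_cs {n : ℕ} (x y : Fin n → ℝ) : (x ⬝ᵥ y) ^ 2 ≤ (x ⬝ᵥ x) * (y ⬝ᵥ y) := by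
  have := Finset.sum_mul_sq_le_sq_mul_sq Finset.univ x y
  simpa [dotProduct, sq] using this

lemma specNorm_quad {n : ℕ} (H : Matrix (Fin n) (Fin n) ℝ) (x : Fin n → ℝ) :
    |x ⬝ᵥ (H *ᵥ x)| ≤ specNorm H * (x ⬝ᵥ x) := by
  apply abs_le_of_sq_le_sq _ (mul_nonneg (specNorm_nonneg H) (dot_self_nn x))
  have h1 := dot_cs x (H *ᵥ x)
  have h2 := mul_le_mul_of_nonneg_left (specNorm_sq H x) (dot_self_nn x)
  nlinarith

lemma specNorm_neg {n : ℕ} (H : Matrix (Fin n) (Fin n) ℝ) : specNorm (-H) = specNorm H := by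
  simp [specNorm]

lemma weyl_aux {n : ℕ} (M H W U : Matrix (Fin n) (Fin n) ℝ) (a b : Fin n → ℝ)
    (ha : Antitone a) (hb : Antitone b) (hW : Wᵀ * W = 1) (hU : Uᵀ * U = 1)
    (hMW : M * W = W * diagonal a) (hMU : (M + H) * U = U * diagonal b) (i : Fin n) :
    a i ≤ b i + specNorm H := by
  classical
  let X := Uᵀ * W
  let N : Matrix (Fin n) (Fin n) ℝ := fun k j =>
    if k < i then X k j else if k = i then 0 else (1 : Matrix (Fin n) (Fin n) ℝ) k j
  have hdet : N.det = 0 := by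
    apply Matrix.det_eq_zero_of_row_eq_zero i
    intro j; simp [N]
  obtain ⟨y, hy0, hy⟩ := Matrix.exists_mulVec_eq_zero_iff.mpr hdet
  have hlow : ∀ k, k < i → (X *ᵥ y) k = 0 := by
    intro k hk
    have := congrFun hy k
    simpa [N, mulVec, dotProduct, hk] using this
  have hhigh : ∀ k, i < k → y k = 0 := by
    intro k hk
    have := congrFun hy k
    simpa [N, mulVec, dotProduct, hk.not_gt, hk.ne', Matrix.one_apply] using this
  have hU' : U * Uᵀ = 1 := mul_eq_one_comm.mp hU
  have hXX : Xᵀ * X = 1 := by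
    simp only [X, transpose_mul, transpose_transpose]
    calc Wᵀ * U * (Uᵀ * W) = Wᵀ * (U * Uᵀ) * W := by noncomm_ring
      _ = 1 := by rw [hU']; simpa using hW
  have e1 : (W *ᵥ y) ⬝ᵥ (M *ᵥ (W *ᵥ y)) = ∑ j, a j * y j ^ 2 := by
    rw [mulVec_mulVec, hMW, ← mulVec_mulVec, dotProduct_mulVec, vecMul_mulVec, hW, vecMul_one] 
    simp [dotProduct, mulVec_diagonal]
    exact Finset.sum_congr rfl fun j _ => by ring
  have e2 : (W *ᵥ y) ⬝ᵥ ((M + H) *ᵥ (W *ᵥ y)) = ∑ j, b j * (X *ᵥ y) j ^ 2 := by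
    have hx : W *ᵥ y = U *ᵥ (X *ᵥ y) := by
      simp [X, mulVec_mulVec, ← Matrix.mul_assoc, hU']
    rw [hx]
    generalize X *ᵥ y = z
    rw [mulVec_mulVec, hMU, ← mulVec_mulVec, dotProduct_mulVec, vecMul_mulVec, hU, vecMul_one]
    simp only [dotProduct, mulVec_diagonal]
    exact Finset.sum_congr rfl fun j _ => by ring
  have e3 : (W *ᵥ y) ⬝ᵥ (W *ᵥ y) = ∑ j, y j ^ 2 := by
    rw [dotProduct_mulVec, vecMul_mulVec, hW, vecMul_one]
    simp [dotProduct, sq]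
  have e4 : ∑ j, (X *ᵥ y) j ^ 2 = ∑ j, y j ^ 2 := by
    have : (X *ᵥ y) ⬝ᵥ (X *ᵥ y) = y ⬝ᵥ y := by
      rw [dotProduct_mulVec, vecMul_mulVec, hXX, vecMul_one]
    simpa [dotProduct, sq] using this
  have f1 : a i * ∑ j, y j ^ 2 ≤ ∑ j, a j * y j ^ 2 := by
    rw [Finset.mul_sum]
    refine Finset.sum_le_sum fun j _ => ?_
    rcases le_or_gt j i with h | h
    · exact mul_le_mul_of_nonneg_right (ha h) (sq_nonneg _)
    · simp [hhigh j h]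
  have f2 : ∑ j, b j * (X *ᵥ y) j ^ 2 ≤ b i * ∑ j, y j ^ 2 := by
    rw [← e4, Finset.mul_sum]
    refine Finset.sum_le_sum fun j _ => ?_
    rcases lt_or_ge j i with h | h
    · simp [hlow j h]
    · exact mul_le_mul_of_nonneg_right (hb h) (sq_nonneg _)
  have f3 := (abs_le.mp (specNorm_quad H (W *ᵥ y))).1
  have e5 : (W *ᵥ y) ⬝ᵥ ((M + H) *ᵥ (W *ᵥ y)) =
      (W *ᵥ y) ⬝ᵥ (M *ᵥ (W *ᵥ y)) + (W *ᵥ y) ⬝ᵥ (H *ᵥ (W *ᵥ y)) := by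
    rw [add_mulVec, dotProduct_add]
  have hpos : 0 < ∑ j, y j ^ 2 := by
    obtain ⟨j, hj⟩ := Function.ne_iff.mp hy0
    exact Finset.sum_pos' (fun _ _ => sq_nonneg _) ⟨j, Finset.mem_univ _, by
      have : y j ≠ 0 := hj
      positivity⟩
  rw [e3] at f3
  refine le_of_mul_le_mul_right ?_ hpos
  nlinarith

lemma weyl {n : ℕ} (M H W U : Matrix (Fin n) (Fin n) ℝ) (a b : Fin n → ℝ)
    (ha : Antitone a) (hb : Antitone b) (hW : Wᵀ * W = 1) (hU : Uᵀ * U = 1)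
    (hMW : M * W = W * diagonal a) (hMU : (M + H) * U = U * diagonal b) (i : Fin n) :
    |b i - a i| ≤ specNorm H := by
  have h1 := weyl_aux M H W U a b ha hb hW hU hMW hMU i
  have h2 := weyl_aux (M + H) (-H) U W b a hb ha hU hW hMU (by simpa using hMW) i
  rw [specNorm_neg] at h2
  rw [abs_le]; constructor <;> linarith

open scoped MatrixOrder in
lemma polar_inv {n : ℕ} (C D : Matrix (Fin n) (Fin n) ℝ) (hC : IsUnit C.det) (hCD : C * D = D * C)
    (hD : Dᵀ = D) :
    ∃ O : Matrix (Fin n) (Fin n) ℝ, Oᵀ * O = 1 ∧ O * D = D * O ∧ (Oᵀ * C).PosSemidef := by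
  have hP : (Cᵀ * C).PosSemidef := by
    simpa using Matrix.posSemidef_conjTranspose_mul_self C
  have hP0 : 0 ≤ Cᵀ * C := Matrix.nonneg_iff_posSemidef.mpr hP
  let S := CFC.sqrt (Cᵀ * C)
  have hSS : S * S = Cᵀ * C := CFC.sqrt_mul_sqrt_self _ hP0
  have hS0 : S.PosSemidef := Matrix.nonneg_iff_posSemidef.mp (CFC.sqrt_nonneg _)
  have hST : Sᵀ = S := by simpa [Matrix.IsHermitian] using hS0.1
  have hCD' : Cᵀ * D = D * Cᵀ := by
    have := congrArg transpose hCD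
    simp only [transpose_mul, hD] at this
    exact this.symm
  have hcomm : Commute (Cᵀ * C) D := by
    show _ = _
    rw [Matrix.mul_assoc, hCD, ← Matrix.mul_assoc, hCD', Matrix.mul_assoc]
  have hSD : Commute S D := by
    have := Commute.cfcₙ_nnreal hcomm NNReal.sqrt
    exact this
  have hSu : IsUnit S.det := by
    have : S.det * S.det = C.det * C.det := by
      rw [← det_mul, hSS, det_mul, det_transpose]
    have h2 : IsUnit (S.det * S.det) := this ▸ hC.mul hC
    exact isUnit_of_mul_isUnit_left h2
  have hi1 : S * S⁻¹ = 1 := Matrix.mul_nonsing_inv _ hSu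
  have hi2 : S⁻¹ * S = 1 := Matrix.nonsing_inv_mul _ hSu
  have hiT : (S⁻¹)ᵀ = S⁻¹ := by rw [transpose_nonsing_inv, hST]
  have hOC : (C * S⁻¹)ᵀ * C = S := by
    rw [transpose_mul, hiT, Matrix.mul_assoc, ← hSS, ← Matrix.mul_assoc, hi2, Matrix.one_mul]
  refine ⟨C * S⁻¹, ?_, ?_, ?_⟩
  · rw [← Matrix.mul_assoc, hOC, hi1]
  · have : S⁻¹ * D = D * S⁻¹ := by
      calc S⁻¹ * D = S⁻¹ * D * (S * S⁻¹) := by rw [hi1, Matrix.mul_one]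
        _ = S⁻¹ * (D * S) * S⁻¹ := by noncomm_ring
        _ = S⁻¹ * (S * D) * S⁻¹ := by rw [hSD.eq]
        _ = (S⁻¹ * S) * D * S⁻¹ := by noncomm_ring
        _ = _ := by rw [hi2, Matrix.one_mul]
    rw [Matrix.mul_assoc, this, ← Matrix.mul_assoc, hCD, Matrix.mul_assoc]
  · rw [hOC]; exact hS0

lemma polar {n : ℕ} (B D : Matrix (Fin n) (Fin n) ℝ) (hBD : B * D = D * B)
    (hD : Dᵀ = D) :
    ∃ O : Matrix (Fin n) (Fin n) ℝ, Oᵀ * O = 1 ∧ O * D = D * O ∧ (Oᵀ * B)ᵀ = Oᵀ * B ∧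
      ∀ x, 0 ≤ x ⬝ᵥ ((Oᵀ * B) *ᵥ x) := by
  have hη : ∀ k : ℕ, ∃ t : ℝ, t ∈ Set.Ioo (0 : ℝ) (1 / ((k : ℝ) + 1)) ∧
      IsUnit (B + t • (1 : Matrix (Fin n) (Fin n) ℝ)).det := by
    intro k
    have hfin : {t : ℝ | (-B).charpoly.IsRoot t}.Finite :=
      Polynomial.finite_setOfPred_isRoot (Matrix.charpoly_monic _).ne_zero
    have hinf : (Set.Ioo (0 : ℝ) (1 / ((k : ℝ) + 1))).Infinite :=
      Set.Ioo_infinite (by positivity)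
    obtain ⟨t, ht, ht2⟩ := (hinf.sdiff hfin).nonempty
    refine ⟨t, ht, ?_⟩
    rw [isUnit_iff_ne_zero]
    intro h0
    apply ht2
    show Polynomial.eval t _ = 0
    rw [Matrix.eval_charpoly, ← h0]
    congr 1
    rw [sub_neg_eq_add, add_comm, Matrix.smul_one_eq_diagonal]
    rfl
  choose η hη1 hη2 using hη
  have hO : ∀ k, ∃ O : Matrix (Fin n) (Fin n) ℝ, Oᵀ * O = 1 ∧ O * D = D * O ∧
      (Oᵀ * (B + η k • (1 : Matrix (Fin n) (Fin n) ℝ))).PosSemidef := by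
    intro k
    apply polar_inv _ _ (hη2 k) _ hD
    simp [Matrix.add_mul, Matrix.mul_add, hBD]
  choose O hO1 hO2 hO3 using hO
  have hηlim : Filter.Tendsto η Filter.atTop (nhds 0) :=
    squeeze_zero (fun k => (hη1 k).1.le) (fun k => (hη1 k).2.le)
      tendsto_one_div_add_atTop_nhds_zero_nat
  have hK : IsCompact (Set.pi Set.univ fun _ : Fin n => Set.pi Set.univ fun _ : Fin n =>
      Set.Icc (-1 : ℝ) 1) :=
    isCompact_univ_pi fun _ => isCompact_univ_pi fun _ => isCompact_Icc
  have hmem : ∀ k, (O k : Fin n → Fin n → ℝ) ∈ (Set.pi Set.univ fun _ : Fin n =>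
      Set.pi Set.univ fun _ : Fin n => Set.Icc (-1 : ℝ) 1) := by
    intro k i _ j _
    have h := congrFun (congrFun (hO1 k) j) j
    simp only [Matrix.mul_apply, transpose_apply, one_apply_eq] at h
    have h2 : O k i j * O k i j ≤ 1 := by
      rw [← h]
      exact Finset.single_le_sum (f := fun i => O k i j * O k i j)
        (fun _ _ => mul_self_nonneg _) (Finset.mem_univ i)
    exact abs_le.mp (abs_le_one_iff_mul_self_le_one.mpr h2)
  obtain ⟨Q, -, φ, hφ, hlim⟩ := hK.tendsto_subseq hmem
  have hlim' : Filter.Tendsto (fun k => O (φ k)) Filter.atTop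
      (nhds (show Matrix (Fin n) (Fin n) ℝ from Q)) := hlim
  generalize (show Matrix (Fin n) (Fin n) ℝ from Q) = Q at hlim'
  have hη' := hηlim.comp hφ.tendsto_atTop
  have cT : Continuous fun A : Matrix (Fin n) (Fin n) ℝ => Aᵀ := by fun_prop
  have hT : Filter.Tendsto (fun k => (O (φ k))ᵀ) Filter.atTop (nhds Qᵀ) :=
    (cT.tendsto Q).comp hlim'
  have hS : Filter.Tendsto (fun k => (O (φ k))ᵀ * (B + η (φ k) • (1 : Matrix (Fin n) (Fin n) ℝ)))
      Filter.atTop (nhds (Qᵀ * B)) := by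
    have h0 : Filter.Tendsto (fun k => B + η (φ k) • (1 : Matrix (Fin n) (Fin n) ℝ))
      Filter.atTop (nhds (B + (0 : ℝ) • (1 : Matrix (Fin n) (Fin n) ℝ))) :=
      tendsto_const_nhds.add (hη'.smul_const _)
    rw [zero_smul, add_zero] at h0
    exact hT.mul h0
  refine ⟨Q, ?_, ?_, ?_, ?_⟩
  · refine tendsto_nhds_unique (hT.mul hlim') ?_
    simp only [hO1]; exact tendsto_const_nhds
  · refine tendsto_nhds_unique (hlim'.mul_const D) ?_
    simp only [hO2]; exact hlim'.const_mul D
  · refine tendsto_nhds_unique ((cT.tendsto _).comp hS) ?_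
    refine hS.congr fun k => ?_
    have := (hO3 (φ k)).1
    simpa [Matrix.IsHermitian] using this.symm
  · intro x
    have c : Continuous fun A : Matrix (Fin n) (Fin n) ℝ => x ⬝ᵥ (A *ᵥ x) := by fun_prop
    refine ge_of_tendsto' ((c.tendsto _).comp hS) fun k => ?_
    have := (hO3 (φ k)).dotProduct_mulVec_nonneg x
    simpa using this

lemma pinch_contr {n : ℕ} (X : Matrix (Fin n) (Fin n) ℝ) (lam : Fin n → ℝ) (hX : Xᵀ * X = 1)
    (B : Matrix (Fin n) (Fin n) ℝ) (hB : ∀ i j, B i j = if lam i = lam j then X i j else 0)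
    (u : Fin n → ℝ) : (B *ᵥ u) ⬝ᵥ (B *ᵥ u) ≤ u ⬝ᵥ u := by
  classical
  let r : ℝ → Fin n → ℝ := fun l j => if lam j = l then u j else 0
  have hBu : ∀ i, (B *ᵥ u) i = (X *ᵥ r (lam i)) i := by
    intro i
    simp only [mulVec, dotProduct, hB, r]
    refine Finset.sum_congr rfl fun j _ => ?_
    by_cases h : lam i = lam j
    · simp [h]
    · simp [h, Ne.symm h]
  have hiso : ∀ y, (X *ᵥ y) ⬝ᵥ (X *ᵥ y) = y ⬝ᵥ y := by
    intro y
    rw [dotProduct_mulVec, vecMul_mulVec, hX, vecMul_one]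
  let T := Finset.univ.image lam
  have hm : ∀ i ∈ (Finset.univ : Finset (Fin n)), lam i ∈ T :=
    fun i hi => Finset.mem_image_of_mem _ hi
  calc (B *ᵥ u) ⬝ᵥ (B *ᵥ u) = ∑ i, (X *ᵥ r (lam i)) i * (X *ᵥ r (lam i)) i := by
        simp [dotProduct, hBu]
    _ = ∑ l ∈ T, ∑ i with lam i = l, (X *ᵥ r (lam i)) i * (X *ᵥ r (lam i)) i :=
        (Finset.sum_fiberwise_of_maps_to hm _).symm
    _ ≤ ∑ l ∈ T, ∑ i with lam i = l, u i * u i := by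
        refine Finset.sum_le_sum fun l _ => ?_
        calc _ = ∑ i with lam i = l, (X *ᵥ r l) i * (X *ᵥ r l) i := by
              refine Finset.sum_congr rfl fun i hi => ?_
              rw [(Finset.mem_filter.mp hi).2]
          _ ≤ ∑ i, (X *ᵥ r l) i * (X *ᵥ r l) i :=
              Finset.sum_le_sum_of_subset_of_nonneg (Finset.filter_subset _ _)
                fun _ _ _ => mul_self_nonneg _
          _ = r l ⬝ᵥ r l := hiso (r l)
          _ = _ := by
              rw [Finset.sum_filter]
              refine Finset.sum_congr rfl fun i _ => ?_
              by_cases h : lam i = l <;> simp [r, h]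
    _ = u ⬝ᵥ u := Finset.sum_fiberwise_of_maps_to hm _

lemma diag_ge {n : ℕ} (S B : Matrix (Fin n) (Fin n) ℝ) (hST : Sᵀ = S)
    (hS0 : ∀ x, 0 ≤ x ⬝ᵥ (S *ᵥ x)) (hSS : S * S = Bᵀ * B)
    (hB : ∀ u : Fin n → ℝ, (B *ᵥ u) ⬝ᵥ (B *ᵥ u) ≤ u ⬝ᵥ u) (i : Fin n) :
    (Bᵀ * B) i i ≤ S i i := by
  classical
  let e : Fin n → ℝ := Pi.single i 1
  let u := S *ᵥ e
  have hsym : ∀ x y : Fin n → ℝ, x ⬝ᵥ (S *ᵥ y) = (S *ᵥ x) ⬝ᵥ y := by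
    intro x y
    rw [dotProduct_mulVec, ← mulVec_transpose, hST]
  have h1 : e ⬝ᵥ (S *ᵥ e) = S i i := by simp [e]
  have h2 : u ⬝ᵥ u = (Bᵀ * B) i i := by
    rw [← hSS]
    show (S *ᵥ e) ⬝ᵥ (S *ᵥ e) = _
    rw [← hsym, mulVec_mulVec]; simp [e]
  have h3 : (S *ᵥ u) ⬝ᵥ (S *ᵥ u) ≤ u ⬝ᵥ u := by
    refine le_trans (le_of_eq ?_) (hB u)
    rw [← hsym, mulVec_mulVec, hSS, dotProduct_mulVec (B *ᵥ u), vecMul_mulVec, ← dotProduct_mulVec]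
  have h4 : u ⬝ᵥ (S *ᵥ u) ≤ u ⬝ᵥ u := by
    have := dot_self_nn (S *ᵥ u - u)
    simp only [sub_dotProduct, dotProduct_sub, dotProduct_comm (S *ᵥ u) u] at this
    linarith
  have h5 := hS0 (e - u)
  have h6 : e ⬝ᵥ (S *ᵥ u) = u ⬝ᵥ u := hsym e u
  have h7 : u ⬝ᵥ (S *ᵥ e) = u ⬝ᵥ u := rfl
  simp only [mulVec_sub, sub_dotProduct, dotProduct_sub, h6, h7, h1] at h5
  linarith

lemma gap_le {n : ℕ} (lam : Fin n → ℝ) (s i : Fin n) (h : lam i ≠ lam s) :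
    eigGap lam s ≤ |lam s - lam i| :=
  csInf_le ⟨0, by rintro x ⟨i, -, rfl⟩; exact abs_nonneg _⟩ ⟨i, h, rfl⟩

lemma gap_pos {n : ℕ} (lam : Fin n → ℝ) (s i : Fin n) (h : lam i ≠ lam s) :
    0 < eigGap lam s := by
  have hfin : {x : ℝ | ∃ i, lam i ≠ lam s ∧ x = |lam s - lam i|}.Finite := by
    refine (Set.finite_range fun i => |lam s - lam i|).subset ?_
    rintro x ⟨i, -, rfl⟩; exact ⟨i, rfl⟩
  have hne : {x : ℝ | ∃ i, lam i ≠ lam s ∧ x = |lam s - lam i|}.Nonempty := ⟨_, i, h, rfl⟩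
  obtain ⟨j, hj, hx⟩ := hne.csInf_mem hfin
  show 0 < sInf _
  rw [hx]
  exact abs_pos.mpr (sub_ne_zero.mpr hj.symm)

lemma mult_pos {n : ℕ} (lam : Fin n → ℝ) (s : Fin n) : (1 : ℝ) ≤ eigMult lam s := by
  have : 0 < eigMult lam s := by
    have : Nonempty {i : Fin n // lam i = lam s} := ⟨⟨s, rfl⟩⟩
    exact Nat.card_pos
  exact_mod_cast this

/-- Existence of an orthonormal eigenbasis of `M` aligned with the perturbed
eigenvectors of `M + H`, with Davis–Kahan angle bounds. -/
theorem aligned_eigenbasis_davis_kahan {n : ℕ} (M H : Matrix (Fin n) (Fin n) ℝ)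
    (hM : M.IsSymm) (hH : H.IsSymm)
    (lam tlam : Fin n → ℝ) (hlam : Antitone lam) (htlam : Antitone tlam)
    (tv : Fin n → (Fin n → ℝ))
    (htON : ∀ i j, tv i ⬝ᵥ tv j = if i = j then (1 : ℝ) else 0)
    (hteig : ∀ i, (M + H).mulVec (tv i) = tlam i • tv i)
    (hMspec : ∃ w : Fin n → (Fin n → ℝ),
      (∀ i j, w i ⬝ᵥ w j = if i = j then (1 : ℝ) else 0) ∧
      ∀ i, M.mulVec (w i) = lam i • w i) :
    ∃ v : Fin n → (Fin n → ℝ),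
      (∀ i j, v i ⬝ᵥ v j = if i = j then (1 : ℝ) else 0) ∧
      (∀ s, M.mulVec (v s) = lam s • v s) ∧
      (∀ t, Real.sqrt (1 - (tv t ⬝ᵥ v t) ^ 2) ≤
        2 * Real.sqrt (2 * eigMult lam t) * specNorm H / eigGap lam t) ∧
      (∀ t s, s ≠ t → lam s ≠ lam t →
        |tv t ⬝ᵥ v s| ≤ 2 * Real.sqrt 2 * specNorm H *
          min (Real.sqrt (eigMult lam s) / eigGap lam s)
            (Real.sqrt (eigMult lam t) / eigGap lam t)) := by
  classical
  obtain ⟨w, hwON, hweig⟩ := hMspec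
  let W : Matrix (Fin n) (Fin n) ℝ := fun a j => w j a
  let U : Matrix (Fin n) (Fin n) ℝ := fun a j => tv j a
  have hW : Wᵀ * W = 1 := by
    ext i j
    rw [Matrix.one_apply]
    exact hwON i j
  have hU : Uᵀ * U = 1 := by
    ext i j
    rw [Matrix.one_apply]
    exact htON i j
  have hMW : M * W = W * diagonal lam := by
    ext a j
    have := congrFun (hweig j) a
    rw [Matrix.mul_diagonal, mul_comm]
    exact this
  have hMU : (M + H) * U = U * diagonal tlam := by
    ext a j
    have := congrFun (hteig j) a
    rw [Matrix.mul_diagonal, mul_comm]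
    exact this
  have hW' : W * Wᵀ = 1 := mul_eq_one_comm.mp hW
  have hU' : U * Uᵀ = 1 := mul_eq_one_comm.mp hU
  by_cases hall : ∀ i j, lam i = lam j
  · refine ⟨tv, htON, ?_, ?_, ?_⟩
    · intro s
      have hd : diagonal lam = lam s • (1 : Matrix (Fin n) (Fin n) ℝ) := by
        rw [Matrix.smul_one_eq_diagonal]
        congr 1
        funext i
        exact hall i s
      have hMs : M = lam s • (1 : Matrix (Fin n) (Fin n) ℝ) := by
        calc M = M * W * Wᵀ := by rw [Matrix.mul_assoc, hW', Matrix.mul_one]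
          _ = _ := by rw [hMW, hd]; simp [hW']
      conv_lhs => rw [hMs]
      rw [smul_mulVec, one_mulVec]
    · intro t
      have h1 : tv t ⬝ᵥ tv t = 1 := by simpa using htON t t
      rw [h1]
      have hg : 0 ≤ eigGap lam t :=
        Real.sInf_nonneg (by rintro x ⟨i, -, rfl⟩; exact abs_nonneg _)
      have := specNorm_nonneg H
      simp only [one_pow, sub_self, Real.sqrt_zero]
      positivity
    · intro t s _ h
      exact absurd (hall s t) h
  push Not at hall
  obtain ⟨p, q, hpq⟩ := hall
  have hδ : ∀ t, 0 < eigGap lam t := by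
    intro t
    by_cases h : lam p = lam t
    · exact gap_pos lam t q (by rw [← h]; exact hpq.symm)
    · exact gap_pos lam t p h
  have hh := specNorm_nonneg H
  -- polar decomposition of the pinched overlap matrix
  let X := Wᵀ * U
  have hXX : Xᵀ * X = 1 := by
    simp only [X, transpose_mul, transpose_transpose]
    calc Uᵀ * W * (Wᵀ * U) = Uᵀ * (W * Wᵀ) * U := by noncomm_ring
      _ = 1 := by rw [hW']; simpa using hU
  let B : Matrix (Fin n) (Fin n) ℝ := fun i j => if lam i = lam j then X i j else 0
  have hBD : B * diagonal lam = diagonal lam * B := by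
    ext i j
    rw [Matrix.mul_diagonal, Matrix.diagonal_mul]
    by_cases h : lam i = lam j
    · rw [h, mul_comm]
    · simp [B, h]
  obtain ⟨O, hO1, hO2, hST, hS0⟩ := polar B (diagonal lam) hBD (by simp)
  have hOO : O * Oᵀ = 1 := mul_eq_one_comm.mp hO1
  have hOz : ∀ i j, lam i ≠ lam j → O i j = 0 := by
    intro i j h
    have := congrFun (congrFun hO2 i) j
    rw [Matrix.mul_diagonal, Matrix.diagonal_mul] at this
    have h2 : (lam i - lam j) * O i j = 0 := by linarith
    exact (mul_eq_zero.mp h2).resolve_left (sub_ne_zero.mpr h)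
  have hSS : (Oᵀ * B) * (Oᵀ * B) = Bᵀ * B := by
    nth_rewrite 1 [← hST]
    rw [transpose_mul, transpose_transpose]
    calc Bᵀ * O * (Oᵀ * B) = Bᵀ * (O * Oᵀ) * B := by noncomm_ring
      _ = _ := by rw [hOO, Matrix.mul_one]
  have hdiag := diag_ge (Oᵀ * B) B hST hS0 hSS (pinch_contr X lam hXX B fun _ _ => rfl)
  let V := W * O
  have hV : Vᵀ * V = 1 := by
    simp only [V, transpose_mul]
    calc Oᵀ * Wᵀ * (W * O) = Oᵀ * (Wᵀ * W) * O := by noncomm_ring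
      _ = 1 := by rw [hW]; simpa using hO1
  have hMV : M * V = V * diagonal lam := by
    simp only [V]
    rw [← Matrix.mul_assoc, hMW, Matrix.mul_assoc, ← hO2, Matrix.mul_assoc]
  let v : Fin n → Fin n → ℝ := fun j a => V a j
  have hvON : ∀ i j, v i ⬝ᵥ v j = if i = j then (1 : ℝ) else 0 := by
    intro i j
    have := congrFun (congrFun hV i) j
    rw [Matrix.one_apply] at this
    exact this
  have hveig : ∀ s, M.mulVec (v s) = lam s • v s := by
    intro s
    funext a
    have := congrFun (congrFun hMV a) s
    rw [Matrix.mul_diagonal, mul_comm] at this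
    exact this
  have hc : ∀ t, tv t ⬝ᵥ v t = (Oᵀ * B) t t := by
    intro t
    have h1 : tv t ⬝ᵥ v t = (Oᵀ * X) t t := by
      have : Oᵀ * X = Vᵀ * U := by simp [X, V, Matrix.mul_assoc]
      rw [this, dotProduct_comm]
      rfl
    rw [h1, Matrix.mul_apply, Matrix.mul_apply]
    refine Finset.sum_congr rfl fun j _ => ?_
    by_cases h : lam j = lam t
    · simp [B, h]
    · simp [hOz j t h]
  -- residual estimate
  have hres : ∀ t, eigGap lam t ^ 2 * (1 - (Bᵀ * B) t t) ≤ 4 * specNorm H ^ 2 := by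
    intro t
    have ht1 : tv t ⬝ᵥ tv t = 1 := by simpa using htON t t
    let r := M *ᵥ tv t - lam t • tv t
    have hr : r = (tlam t - lam t) • tv t - H *ᵥ tv t := by
      have := hteig t
      rw [add_mulVec] at this
      simp only [r, sub_smul, ← this]
      abel
    have hrr : r ⬝ᵥ r ≤ 4 * specNorm H ^ 2 := by
      have hwey := weyl M H W U lam tlam hlam htlam hW hU hMW hMU t
      have hq := specNorm_quad H (tv t)
      have hn := specNorm_sq H (tv t)
      rw [ht1, mul_one] at hq hn
      rw [hr]
      simp only [sub_dotProduct, dotProduct_sub, smul_dotProduct, dotProduct_smul, ht1,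
        dotProduct_comm (H *ᵥ tv t) (tv t), smul_eq_mul]
      have h1 : (tlam t - lam t) ^ 2 ≤ specNorm H ^ 2 := sq_le_sq' (abs_le.mp hwey).1 (abs_le.mp hwey).2
      have h2 : |(tlam t - lam t) * (tv t ⬝ᵥ H *ᵥ tv t)| ≤ specNorm H * specNorm H := by
        rw [abs_mul]
        exact mul_le_mul hwey hq (abs_nonneg _) hh
      have h3 := (abs_le.mp h2).1
      nlinarith
    have hWr : ∀ j, (Wᵀ *ᵥ r) j = (lam j - lam t) * X j t := by
      intro j
      have h1 : Wᵀ * M = diagonal lam * Wᵀ := by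
        have := congrArg transpose hMW
        rw [transpose_mul, transpose_mul, hM.eq, diagonal_transpose] at this
        exact this
      have h2 : Wᵀ *ᵥ r = diagonal lam *ᵥ (Wᵀ *ᵥ tv t) - lam t • (Wᵀ *ᵥ tv t) := by
        simp only [r, mulVec_sub, mulVec_mulVec, mulVec_smul, h1]
      rw [h2]
      simp only [Pi.sub_apply, mulVec_diagonal, Pi.smul_apply, smul_eq_mul]
      have h3 : (Wᵀ *ᵥ tv t) j = X j t := rfl
      rw [h3]; ring
    have hWn : ∑ j, ((lam j - lam t) * X j t) ^ 2 = r ⬝ᵥ r := by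
      have : (Wᵀ *ᵥ r) ⬝ᵥ (Wᵀ *ᵥ r) = r ⬝ᵥ r := by
        rw [dotProduct_mulVec, vecMul_mulVec, transpose_transpose, hW', vecMul_one]
      rw [← this]
      simp only [dotProduct, hWr, sq]
    have hX1 : ∑ j, X j t ^ 2 = 1 := by
      have := congrFun (congrFun hXX t) t
      simpa [Matrix.mul_apply, sq] using this
    have hBt : (Bᵀ * B) t t = ∑ j, if lam j = lam t then X j t ^ 2 else 0 := by
      rw [Matrix.mul_apply]
      refine Finset.sum_congr rfl fun j _ => ?_
      rw [transpose_apply]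
      by_cases h : lam j = lam t <;> simp [B, h, sq]
    rw [hBt, ← hX1, ← Finset.sum_sub_distrib, Finset.mul_sum]
    refine le_trans (Finset.sum_le_sum fun j _ => ?_) (hWn.trans_le hrr)
    by_cases h : lam j = lam t
    · simp [h]
    · simp only [h, if_false, sub_zero, mul_pow]
      refine mul_le_mul_of_nonneg_right ?_ (sq_nonneg _)
      rw [← sq_abs (lam j - lam t), abs_sub_comm]
      exact pow_le_pow_left₀ (hδ t).le (gap_le lam t j h) 2
  -- distance bound
  have hdist : ∀ t, (tv t - v t) ⬝ᵥ (tv t - v t) ≤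
      (2 * Real.sqrt 2 * specNorm H * (Real.sqrt (eigMult lam t) / eigGap lam t)) ^ 2 ∧
      1 - (tv t ⬝ᵥ v t) ^ 2 ≤ (tv t - v t) ⬝ᵥ (tv t - v t) := by
    intro t
    have ht1 : tv t ⬝ᵥ tv t = 1 := by simpa using htON t t
    have hv1 : v t ⬝ᵥ v t = 1 := by simpa using hvON t t
    have hexp : (tv t - v t) ⬝ᵥ (tv t - v t) = 2 - 2 * (tv t ⬝ᵥ v t) := by
      simp only [sub_dotProduct, dotProduct_sub, ht1, hv1, dotProduct_comm (v t) (tv t)]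
      ring
    rw [hexp]
    refine ⟨?_, by nlinarith [sq_nonneg (1 - tv t ⬝ᵥ v t)]⟩
    have h1 := hdiag t
    rw [← hc t] at h1
    have hd := mult_pos lam t
    have hg := hδ t
    have e : (2 * Real.sqrt 2 * specNorm H * (Real.sqrt (eigMult lam t) / eigGap lam t)) ^ 2
        = 8 * specNorm H ^ 2 * eigMult lam t / eigGap lam t ^ 2 := by
      simp only [mul_pow, div_pow]
      rw [Real.sq_sqrt (by norm_num), Real.sq_sqrt (by positivity)]
      ring
    rw [e, le_div_iff₀ (by positivity)]
    have h2 := hres t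
    have h3 : (2 - 2 * (tv t ⬝ᵥ v t)) * eigGap lam t ^ 2 ≤
        (2 * (1 - (Bᵀ * B) t t)) * eigGap lam t ^ 2 :=
      mul_le_mul_of_nonneg_right (by linarith) (sq_nonneg _)
    have h4 : 8 * specNorm H ^ 2 * 1 ≤ 8 * specNorm H ^ 2 * eigMult lam t :=
      mul_le_mul_of_nonneg_left hd (by positivity)
    linarith
  have hbn : ∀ t, 0 ≤ 2 * Real.sqrt 2 * specNorm H * (Real.sqrt (eigMult lam t) / eigGap lam t) := by
    intro t
    have := hδ t
    positivity
  refine ⟨v, hvON, hveig, ?_, ?_⟩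
  · intro t
    have e : 2 * Real.sqrt (2 * eigMult lam t) * specNorm H / eigGap lam t =
        2 * Real.sqrt 2 * specNorm H * (Real.sqrt (eigMult lam t) / eigGap lam t) := by
      rw [Real.sqrt_mul (by norm_num)]
      ring
    rw [e]
    exact Real.sqrt_le_iff.mpr ⟨hbn t, (hdist t).2.trans (hdist t).1⟩
  · intro t s hst hl
    rw [mul_min_of_nonneg _ _ (by positivity)]
    have ht1 : tv t ⬝ᵥ tv t = 1 := by simpa using htON t t
    have hv1 : v s ⬝ᵥ v s = 1 := by simpa using hvON s s
    refine le_min ?_ ?_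
    · apply abs_le_of_sq_le_sq _ (hbn s)
      refine le_trans ?_ (hdist s).1
      have h0 : tv t ⬝ᵥ tv s = 0 := by simpa [hst.symm] using htON t s
      have := dot_cs (tv t) (tv s - v s)
      rw [ht1, one_mul, dotProduct_sub, h0, zero_sub, neg_sq] at this
      exact this
    · apply abs_le_of_sq_le_sq _ (hbn t)
      refine le_trans ?_ (hdist t).1
      have h0 : v t ⬝ᵥ v s = 0 := by simpa [hst.symm] using hvON t s
      have := dot_cs (tv t - v t) (v s)
      rw [hv1, mul_one, sub_dotProduct, h0, sub_zero] at this
      exact this
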